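/- arXiv:1411.3463 — 2 statements merged into one kernel-verified Lean document; each statement's English description precedes it below -/
import Mathlib

section
/- Fix a positive integer M. Define reals v_i^{(m)}, w_i^{(m)} (i = 1,…,N, m = 0,…,M) and z_i^{(q)} (i = 1,…,N, q = 0,…,M−1) by: v_i^{(0)} = 1 and w_i^{(0)} = 1 for all i; for p = 1,…,M: v_N^{(p)} = w_N^{(p−1)}/q_N, v_i^{(p)} = (e_i·v_{i+1}^{(p)} + z_i^{(p−1)} − w_i^{(p−1)})/q_i for i = 1,…,N−1, w_1^{(p)} = v_1^{(p−1)}/q_1, w_i^{(p)} = (e_{i−1}·w_{i−1}^{(p)} + z_i^{(p−1)} − v_i^{(p−1)})/q_i for i = 2,…,N; and for q = 0,…,M−1: z_1^{(q)} = 2·v_1^{(q)}, z_i^{(q)} = z_{i−1}^{(q)} + 2(v_i^{(q)} − w_{i−1}^{(q)}) for i = 2,…,N. Then for every m = 0,…,M and every i = 1,…,N, v_i^{(m)} equals the (i,i)-entry of (B^⊤B)^{−m} and w_i^{(m)} equals the (i,i)-entry of (BB^⊤)^{−m}. -/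
open Matrix

/-!
Let `X = (BᵀB)^{-(m+1)}` and `U = (BBᵀ)^{-(m+1)}`. Since `B` intertwines `BᵀB` and `BBᵀ`, the
matrix `Y = BX = UB` satisfies `BᵀY = (BᵀB)^{-m}` and `YBᵀ = (BBᵀ)^{-m}`. As `B` is upper
bidiagonal, the diagonals of `BᵀY` and `YBᵀ` differ, up to a shift by one, only through the diagonal
of `Y`; telescoping gives `z_i = 2 √q_i Y_{ii}`. By the symmetry of `X`, the diagonal of `BXBᵀ`
involves only those of `X` and `Y`; solving for the diagonal of `X` from the last entry backwards is
the recurrence for `v`. Likewise, with `Y = UB`, the symmetry of `U` gives the recurrence for `w`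
from the first entry forwards.
-/

theorem mul_apply_eq_transpose_mul_transpose_apply {l m n R : Type*} [Fintype n] [CommSemiring R]
    (A : Matrix l n R) (C : Matrix n m R) (i : l) (j : m) : (A * C) i j = (Cᵀ * Aᵀ) j i := by
  rw [← transpose_mul, transpose_apply]

section InversePowers

variable {n R : Type*} [Fintype n] [DecidableEq n] [CommRing R] {A B C : Matrix n n R}

theorem isSymm_inv_pow (hA : A.IsSymm) (m : ℕ) : (A⁻¹ ^ m).IsSymm :=
  IsSymm.pow (by rw [IsSymm, transpose_nonsing_inv, hA.eq]) m

theorem mul_inv_pow_succ (hA : IsUnit A.det) (m : ℕ) : A * A⁻¹ ^ (m + 1) = A⁻¹ ^ m := by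
  rw [pow_succ', mul_nonsing_inv_cancel_left _ _ hA]

theorem inv_pow_succ_mul (hA : IsUnit A.det) (m : ℕ) : A⁻¹ ^ (m + 1) * A = A⁻¹ ^ m := by
  rw [pow_succ, nonsing_inv_mul_cancel_right _ _ hA]

theorem semiconjBy_inv_mul_swap (hB : IsUnit B.det) : SemiconjBy B (C * B)⁻¹ (B * C)⁻¹ := by
  rw [SemiconjBy, Matrix.mul_inv_rev, Matrix.mul_inv_rev, mul_nonsing_inv_cancel_left _ _ hB,
    nonsing_inv_mul_cancel_right _ _ hB]

end InversePowers

section UpperBidiagonal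

variable {R : Type*} {N : ℕ}

/-- The `N × N` upper bidiagonal matrix with diagonal `a 0, …, a (N - 1)` and superdiagonal
`b 0, …, b (N - 2)`. The other terms of the sequences `a` and `b` are irrelevant. -/
def upperBidiagonal [Zero R] (N : ℕ) (a b : ℕ → R) : Matrix (Fin N) (Fin N) R :=
  Matrix.of fun i j => if (j : ℕ) = i then a i else if (j : ℕ) = i + 1 then b i else 0

theorem upperBidiagonal_apply [Zero R] (a b : ℕ → R) (i j : Fin N) :
    upperBidiagonal N a b i j = if (j : ℕ) = i then a i else if (j : ℕ) = i + 1 then b i else 0 :=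
  rfl

theorem det_upperBidiagonal [CommRing R] (a b : ℕ → R) :
    (upperBidiagonal N a b).det = ∏ i : Fin N, a i := by
  have hupper : (upperBidiagonal N a b).IsUpperTriangular := fun i j (hij : j < i) => by
    rw [upperBidiagonal_apply, if_neg (by lia), if_neg (by lia)]
  simp [det_of_isUpperTriangular hupper, upperBidiagonal_apply]

section Entries

variable [CommSemiring R] (a b : ℕ → R) {i j : Fin N} {m : Type*}

theorem upperBidiagonal_mul_apply (hij : (j : ℕ) = i + 1) (Z : Matrix (Fin N) m R) (k : m) :
    (upperBidiagonal N a b * Z) i k = a i * Z i k + b i * Z j k := by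
  rw [mul_apply, Fintype.sum_eq_add i j (by lia)]
  · simp [upperBidiagonal_apply, hij]
  · rintro l ⟨hli, hlj⟩
    rw [upperBidiagonal_apply, if_neg (by lia), if_neg (by lia), zero_mul]

theorem upperBidiagonal_mul_apply_last (hi : (i : ℕ) + 1 = N) (Z : Matrix (Fin N) m R) (k : m) :
    (upperBidiagonal N a b * Z) i k = a i * Z i k := by
  rw [mul_apply, Fintype.sum_eq_single i]
  · simp [upperBidiagonal_apply]
  · intro l hl
    rw [upperBidiagonal_apply, if_neg (by lia), if_neg (by lia), zero_mul]

theorem mul_upperBidiagonal_apply (hij : (j : ℕ) = i + 1) (Z : Matrix m (Fin N) R) (k : m) :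
    (Z * upperBidiagonal N a b) k j = a j * Z k j + b i * Z k i := by
  rw [mul_apply, Fintype.sum_eq_add j i (by lia)]
  · simp [upperBidiagonal_apply, hij, mul_comm]
  · rintro l ⟨hlj, hli⟩
    rw [upperBidiagonal_apply, if_neg (by lia), if_neg (by lia), mul_zero]

theorem mul_upperBidiagonal_apply_first (hi : (i : ℕ) = 0) (Z : Matrix m (Fin N) R) (k : m) :
    (Z * upperBidiagonal N a b) k i = a i * Z k i := by
  rw [mul_apply, Fintype.sum_eq_single i]
  · simp [upperBidiagonal_apply, mul_comm]
  · intro l hl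
    rw [upperBidiagonal_apply, if_neg (by lia), if_neg (by lia), mul_zero]

theorem mul_transpose_upperBidiagonal_apply (hij : (j : ℕ) = i + 1) (Z : Matrix m (Fin N) R)
    (k : m) : (Z * (upperBidiagonal N a b)ᵀ) k i = a i * Z k i + b i * Z k j := by
  rw [mul_apply_eq_transpose_mul_transpose_apply, transpose_transpose,
    upperBidiagonal_mul_apply a b hij, transpose_apply, transpose_apply]

theorem mul_transpose_upperBidiagonal_apply_last (hi : (i : ℕ) + 1 = N) (Z : Matrix m (Fin N) R)
    (k : m) : (Z * (upperBidiagonal N a b)ᵀ) k i = a i * Z k i := by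
  rw [mul_apply_eq_transpose_mul_transpose_apply, transpose_transpose,
    upperBidiagonal_mul_apply_last a b hi, transpose_apply]

theorem transpose_upperBidiagonal_mul_apply (hij : (j : ℕ) = i + 1) (Z : Matrix (Fin N) m R)
    (k : m) : ((upperBidiagonal N a b)ᵀ * Z) j k = a j * Z j k + b i * Z i k := by
  rw [mul_apply_eq_transpose_mul_transpose_apply, transpose_transpose,
    mul_upperBidiagonal_apply a b hij, transpose_apply, transpose_apply]

theorem transpose_upperBidiagonal_mul_apply_first (hi : (i : ℕ) = 0) (Z : Matrix (Fin N) m R)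
    (k : m) : ((upperBidiagonal N a b)ᵀ * Z) i k = a i * Z i k := by
  rw [mul_apply_eq_transpose_mul_transpose_apply, transpose_transpose,
    mul_upperBidiagonal_apply_first a b hi, transpose_apply]

end Entries

section Diagonals

variable [CommSemiring R] (a b : ℕ → R) {i j : Fin N} {X U : Matrix (Fin N) (Fin N) R}

theorem transpose_upperBidiagonal_mul_diag_add (hij : (j : ℕ) = i + 1)
    (Y : Matrix (Fin N) (Fin N) R) :
    ((upperBidiagonal N a b)ᵀ * Y) j j + a i * Y i i =
      (Y * (upperBidiagonal N a b)ᵀ) i i + a j * Y j j := by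
  rw [transpose_upperBidiagonal_mul_apply a b hij, mul_transpose_upperBidiagonal_apply a b hij]
  ring

theorem upperBidiagonal_conj_diag_add (hij : (j : ℕ) = i + 1) (hX : X.IsSymm) :
    (upperBidiagonal N a b * X * (upperBidiagonal N a b)ᵀ) i i + a i ^ 2 * X i i =
      b i ^ 2 * X j j + 2 * (a i * (upperBidiagonal N a b * X) i i) := by
  simp only [mul_transpose_upperBidiagonal_apply a b hij, upperBidiagonal_mul_apply a b hij,
    hX.apply i j]
  ring

theorem upperBidiagonal_conj_diag_last (hi : (i : ℕ) + 1 = N) :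
    (upperBidiagonal N a b * X * (upperBidiagonal N a b)ᵀ) i i = a i ^ 2 * X i i := by
  rw [mul_transpose_upperBidiagonal_apply_last a b hi, upperBidiagonal_mul_apply_last a b hi]
  ring

theorem transpose_upperBidiagonal_conj_diag_add (hij : (j : ℕ) = i + 1) (hU : U.IsSymm) :
    ((upperBidiagonal N a b)ᵀ * (U * upperBidiagonal N a b)) j j + a j ^ 2 * U j j =
      b i ^ 2 * U i i + 2 * (a j * (U * upperBidiagonal N a b) j j) := by
  simp only [transpose_upperBidiagonal_mul_apply a b hij, mul_upperBidiagonal_apply a b hij,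
    hU.apply i j]
  ring

theorem transpose_upperBidiagonal_conj_diag_first (hi : (i : ℕ) = 0) :
    ((upperBidiagonal N a b)ᵀ * (U * upperBidiagonal N a b)) i i = a i ^ 2 * U i i := by
  rw [transpose_upperBidiagonal_mul_apply_first a b hi, mul_upperBidiagonal_apply_first a b hi]
  ring

end Diagonals

end UpperBidiagonal

section Recurrences

variable {K : Type*} {N : ℕ} {a b q e v w z x : ℕ → K} {X U Y : Matrix (Fin N) (Fin N) K}

theorem eq_two_mul_diag_of_recurrence [CommRing K]
    (hv : ∀ i (hi : i < N), v i = ((upperBidiagonal N a b)ᵀ * Y) ⟨i, hi⟩ ⟨i, hi⟩)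
    (hw : ∀ i (hi : i < N), w i = (Y * (upperBidiagonal N a b)ᵀ) ⟨i, hi⟩ ⟨i, hi⟩)
    (hfirst : z 0 = 2 * v 0)
    (hrec : ∀ i, 0 < i → i < N → z i = z (i - 1) + 2 * (v i - w (i - 1)))
    (i : ℕ) (hi : i < N) : z i = 2 * (a i * Y ⟨i, hi⟩ ⟨i, hi⟩) := by
  induction i with
  | zero => rw [hfirst, hv 0 hi, transpose_upperBidiagonal_mul_apply_first a b rfl]
  | succ i ih =>
    have hi' : i < N := by lia
    have hdiag :=
      transpose_upperBidiagonal_mul_diag_add a b (i := ⟨i, hi'⟩) (j := ⟨i + 1, hi⟩) rfl Y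
    rw [hrec (i + 1) i.succ_pos hi, Nat.add_sub_cancel, ih hi', hv _ hi, hw _ hi']
    linear_combination 2 * hdiag

variable [Field K]

theorem eq_diag_of_backward_recurrence (ha : ∀ i < N, a i ^ 2 = q i) (hq : ∀ i < N, q i ≠ 0)
    (hb : ∀ i, i + 1 < N → b i ^ 2 = e i) (hX : X.IsSymm)
    (hw : ∀ i (hi : i < N),
      w i = (upperBidiagonal N a b * X * (upperBidiagonal N a b)ᵀ) ⟨i, hi⟩ ⟨i, hi⟩)
    (hz : ∀ i (hi : i < N), z i = 2 * (a i * (upperBidiagonal N a b * X) ⟨i, hi⟩ ⟨i, hi⟩))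
    (hlast : x (N - 1) = w (N - 1) / q (N - 1))
    (hrec : ∀ i, i + 1 < N → x i = (e i * x (i + 1) + z i - w i) / q i)
    (i : ℕ) (hi : i < N) : x i = X ⟨i, hi⟩ ⟨i, hi⟩ := by
  have hi' : i ≤ N - 1 := by lia
  induction hi' using Nat.decreasingInduction with
  | self =>
    rw [hlast, div_eq_iff (hq _ hi), hw _ hi, upperBidiagonal_conj_diag_last a b (by grind),
      ha _ hi, mul_comm]
  | of_succ i _ ih =>
    have hsucc : i + 1 < N := by lia
    have hdiag := upperBidiagonal_conj_diag_add a b (i := ⟨i, hi⟩) (j := ⟨i + 1, hsucc⟩) rfl hX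
    rw [ha i hi, hb i hsucc] at hdiag
    rw [hrec i hsucc, div_eq_iff (hq i hi), ih hsucc, hz i hi, hw i hi]
    linear_combination -hdiag

theorem eq_diag_of_forward_recurrence (ha : ∀ i < N, a i ^ 2 = q i) (hq : ∀ i < N, q i ≠ 0)
    (hb : ∀ i, i + 1 < N → b i ^ 2 = e i) (hU : U.IsSymm)
    (hv : ∀ i (hi : i < N),
      v i = ((upperBidiagonal N a b)ᵀ * (U * upperBidiagonal N a b)) ⟨i, hi⟩ ⟨i, hi⟩)
    (hz : ∀ i (hi : i < N), z i = 2 * (a i * (U * upperBidiagonal N a b) ⟨i, hi⟩ ⟨i, hi⟩))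
    (hfirst : x 0 = v 0 / q 0)
    (hrec : ∀ i, 0 < i → i < N → x i = (e (i - 1) * x (i - 1) + z i - v i) / q i)
    (i : ℕ) (hi : i < N) : x i = U ⟨i, hi⟩ ⟨i, hi⟩ := by
  induction i with
  | zero =>
    rw [hfirst, div_eq_iff (hq 0 hi), hv 0 hi, transpose_upperBidiagonal_conj_diag_first a b rfl,
      ha 0 hi, mul_comm]
  | succ i ih =>
    have hi' : i < N := by lia
    have hdiag :=
      transpose_upperBidiagonal_conj_diag_add a b (i := ⟨i, hi'⟩) (j := ⟨i + 1, hi⟩) rfl hU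
    rw [ha (i + 1) hi, hb i hi] at hdiag
    rw [hrec (i + 1) i.succ_pos hi, div_eq_iff (hq (i + 1) hi), Nat.add_sub_cancel, ih hi',
      hz (i + 1) hi, hv (i + 1) hi]
    linear_combination -hdiag

end Recurrences

theorem stmt_1_general {K : Type*} [Field K] {N : ℕ} {a b q e : ℕ → K}
    (ha : ∀ i < N, a i ^ 2 = q i) (hq : ∀ i < N, q i ≠ 0) (hb : ∀ i, i + 1 < N → b i ^ 2 = e i)
    {B : Matrix (Fin N) (Fin N) K} (hB : B = upperBidiagonal N a b)
    {M : ℕ} {v w z : ℕ → ℕ → K}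
    (hv0 : ∀ i, i < N → v 0 i = 1)
    (hw0 : ∀ i, i < N → w 0 i = 1)
    (hvN : ∀ p, 1 ≤ p → p ≤ M → v p (N - 1) = w (p - 1) (N - 1) / q (N - 1))
    (hvi : ∀ p, 1 ≤ p → p ≤ M → ∀ i, i + 1 < N →
      v p i = (e i * v p (i + 1) + z (p - 1) i - w (p - 1) i) / q i)
    (hw1 : ∀ p, 1 ≤ p → p ≤ M → w p 0 = v (p - 1) 0 / q 0)
    (hwi : ∀ p, 1 ≤ p → p ≤ M → ∀ i, 0 < i → i < N →
      w p i = (e (i - 1) * w p (i - 1) + z (p - 1) i - v (p - 1) i) / q i)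
    (hz1 : ∀ r < M, z r 0 = 2 * v r 0)
    (hzi : ∀ r < M, ∀ i, 0 < i → i < N → z r i = z r (i - 1) + 2 * (v r i - w r (i - 1)))
    (m : ℕ) (hm : m ≤ M) (i : ℕ) (hi : i < N) :
    v m i = ((Bᵀ * B)⁻¹ ^ m) ⟨i, hi⟩ ⟨i, hi⟩ ∧ w m i = ((B * Bᵀ)⁻¹ ^ m) ⟨i, hi⟩ ⟨i, hi⟩ := by
  have hdet : IsUnit B.det := by
    rw [hB, det_upperBidiagonal, isUnit_iff_ne_zero, Finset.prod_ne_zero_iff]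
    exact fun i _ h0 => hq i i.2 (by rw [← ha i i.2, h0, zero_pow two_ne_zero])
  have hdetT : IsUnit Bᵀ.det := by rwa [det_transpose]
  induction m generalizing i with
  | zero => simp [hv0 i hi, hw0 i hi]
  | succ m ih =>
    set X := (Bᵀ * B)⁻¹ ^ (m + 1) with hX
    set U := (B * Bᵀ)⁻¹ ^ (m + 1) with hU
    have hXU : B * X = U * B := ((semiconjBy_inv_mul_swap hdet).pow_right (m + 1)).eq
    have hXsymm : X.IsSymm := isSymm_inv_pow (isSymm_transpose_mul_self B) _
    have hUsymm : U.IsSymm := isSymm_inv_pow (isSymm_mul_transpose_self B) _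
    have hv : ∀ i (hi : i < N), v m i = (Bᵀ * (B * X)) ⟨i, hi⟩ ⟨i, hi⟩ := fun i hi => by
      rw [(ih (by lia) i hi).1, ← mul_assoc, hX, mul_inv_pow_succ (det_mul Bᵀ B ▸ hdetT.mul hdet)]
    have hw : ∀ i (hi : i < N), w m i = (B * X * Bᵀ) ⟨i, hi⟩ ⟨i, hi⟩ := fun i hi => by
      rw [(ih (by lia) i hi).2, hXU, mul_assoc, hU,
        inv_pow_succ_mul (det_mul B Bᵀ ▸ hdet.mul hdetT)]
    subst hB
    have hz := eq_two_mul_diag_of_recurrence hv hw (hz1 m hm) (hzi m hm)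
    exact ⟨eq_diag_of_backward_recurrence ha hq hb hXsymm hw hz (hvN _ m.succ_pos hm)
        (hvi _ m.succ_pos hm) i hi,
      eq_diag_of_forward_recurrence ha hq hb hUsymm (hXU ▸ hv) (hXU ▸ hz) (hw1 _ m.succ_pos hm)
        (hwi _ m.succ_pos hm) i hi⟩

/-- the recurrence of Kimura et al. computes the diagonal entries of
`(BᵀB)^{-m}` and `(BBᵀ)^{-m}` for `m = 0, …, M`. Indices are 0-based: the paper's
1-based `v_i^{(m)}` is `v m (i-1)`, etc. -/
theorem stmt_1 (N : ℕ) (hN : 0 < N) (q e : ℕ → ℝ)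
    (hq : ∀ i, i < N → 0 < q i) (he : ∀ i, i + 1 < N → 0 < e i)
    (B : Matrix (Fin N) (Fin N) ℝ)
    (hB : ∀ i j : Fin N, B i j =
      if (j : ℕ) = (i : ℕ) then Real.sqrt (q i)
      else if (j : ℕ) = (i : ℕ) + 1 then Real.sqrt (e i) else 0)
    (M : ℕ) (hM : 1 ≤ M)
    (v w z : ℕ → ℕ → ℝ)
    (hv0 : ∀ i, i < N → v 0 i = 1)
    (hw0 : ∀ i, i < N → w 0 i = 1)
    (hvN : ∀ p, 1 ≤ p → p ≤ M → v p (N - 1) = w (p - 1) (N - 1) / q (N - 1))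
    (hvi : ∀ p, 1 ≤ p → p ≤ M → ∀ i, i + 1 < N →
      v p i = (e i * v p (i + 1) + z (p - 1) i - w (p - 1) i) / q i)
    (hw1 : ∀ p, 1 ≤ p → p ≤ M → w p 0 = v (p - 1) 0 / q 0)
    (hwi : ∀ p, 1 ≤ p → p ≤ M → ∀ i, 0 < i → i < N →
      w p i = (e (i - 1) * w p (i - 1) + z (p - 1) i - v (p - 1) i) / q i)
    (hz1 : ∀ r, r ≤ M - 1 → z r 0 = 2 * v r 0)
    (hzi : ∀ r, r ≤ M - 1 → ∀ i, 0 < i → i < N →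
      z r i = z r (i - 1) + 2 * (v r i - w r (i - 1))) :
    ∀ m, m ≤ M → ∀ i (hi : i < N),
      v m i = ((Bᵀ * B)⁻¹ ^ m) ⟨i, hi⟩ ⟨i, hi⟩ ∧
      w m i = ((B * Bᵀ)⁻¹ ^ m) ⟨i, hi⟩ ⟨i, hi⟩ := by
  exact stmt_1_general (fun i hi => Real.sq_sqrt (hq i hi).le) (fun i hi => (hq i hi).ne')
    (fun i hi => Real.sq_sqrt (he i hi).le) (Matrix.ext hB) hv0 hw0 hvN hvi hw1 hwi
    (fun r hr => hz1 r (by lia)) (fun r hr => hzi r (by lia))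
end

section
/- Define reals h̃_i^{(p)} (i = 1,…,N, p ≥ 1) by: h̃_N^{(1)} = 1/q_N; h̃_i^{(1)} = F_i·h̃_{i+1}^{(1)} + 1/q_i for i = 1,…,N−1; h̃_N^{(p)} = 0 for p ≥ 2; and h̃_i^{(p)} = F_i·(h̃_{i+1}^{(p)} + p·h̃_{i+1}^{(1)}·h̃_{i+1}^{(p−1)}) + Σ_{k=1}^{p−2} C(p,k)·h̃_{i+1}^{(k)}·h̃_i^{(p−k)} for i = 1,…,N−1 and p ≥ 2, where C(p,k) is the binomial coefficient. Define H̃_i^{(p)} by H̃_i^{(1)} = h̃_i^{(1)} and H̃_i^{(p)} = h̃_i^{(p)} + Σ_{k=1}^{p−1} C(p−1,k)·h̃_i^{(k)}·H̃_i^{(p−k)} for p ≥ 2. Then for every positive integer p, Tr((BB^⊤)^{−p}) = (1/(p−1)!)·Σ_{i=1}^{N} H̃_i^{(p)}. -/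
open Matrix

/-!
Put `A = BBᵀ`. By Jacobi's formula, `-(det (A - X))' / det (A - X)` is the power series
`∑_{p ≥ 0} Tr(A^{-(p+1)}) X^p`. The Gauss factorization of the tridiagonal matrix `A - X`, started
at the last row, gives `det (A - X) = ∏ D_i` with `D_{N-1} = q_{N-1} - X` and
`D_i = q_i + e_i - X - e_i q_{i+1} / D_{i+1}`. In terms of `a_i = 1 - D_i / q_i` this is
`a_i = F_i a_{i+1} + a_{i+1} a_i + (X / q_i) (1 - a_{i+1})`, which is the recurrence for
`h̃_i^{(p)}` as the coefficients of the series `a_i = ∑_{p ≥ 1} h̃_i^{(p)} X^p / p!`.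
The recurrence for `H̃_i^{(p)}` says that `-D_i' / D_i = a_i' / (1 - a_i)` is
`∑_{p ≥ 0} H̃_i^{(p+1)} X^p / p!`; now sum over `i` and compare coefficients.
-/

namespace BidiagonalTrace

open Finset PowerSeries

section Derivation

variable {R S : Type*} [CommSemiring R] [CommRing S] [Algebra R S] (D : Derivation R S S)

lemma derivation_prod {ι : Type*} [DecidableEq ι] (s : Finset ι) (f : ι → S) :
    D (∏ i ∈ s, f i) = ∑ i ∈ s, (∏ j ∈ s.erase i, f j) * D (f i) := by
  induction s using Finset.induction_on with
  | empty => simp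
  | insert a s ha ih =>
    have erase_insert_of_mem : ∀ i ∈ s,
        ∏ j ∈ (insert a s).erase i, f j = f a * ∏ j ∈ s.erase i, f j := fun i hi => by
      rw [erase_insert_of_ne (ne_of_mem_of_not_mem hi ha).symm,
        prod_insert fun h => ha (mem_of_mem_erase h)]
    rw [prod_insert ha, sum_insert ha, erase_insert ha, D.leibniz, ih, smul_eq_mul, smul_eq_mul,
      mul_sum, add_comm]
    congr 1
    exact sum_congr rfl fun i hi => by rw [erase_insert_of_mem i hi, mul_assoc]

lemma derivation_prod_of_eq_mul {ι : Type*} {s : Finset ι} {f c : ι → S}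
    (h : ∀ i ∈ s, D (f i) = c i * f i) :
    D (∏ i ∈ s, f i) = (∑ i ∈ s, c i) * ∏ i ∈ s, f i := by
  classical
  rw [derivation_prod, sum_mul]
  refine sum_congr rfl fun i hi => ?_
  rw [h i hi, ← prod_erase_mul s f hi]
  ring

variable {n : Type*} [Fintype n] [DecidableEq n]

lemma derivation_det_eq_sum_updateCol (M : Matrix n n S) :
    D M.det = ∑ i, (M.updateCol i fun k => D (M k i)).det := by
  simp only [det_apply, map_sum, Units.smul_def, map_zsmul, derivation_prod, smul_sum]
  rw [sum_comm]
  refine sum_congr rfl fun i _ => sum_congr rfl fun σ _ => ?_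
  rw [← prod_erase_mul univ _ (mem_univ i), updateCol_self]
  congr 2
  exact prod_congr rfl fun j hj => (updateCol_ne (ne_of_mem_erase hj)).symm

lemma derivation_det_eq_trace_adjugate_mul (M : Matrix n n S) :
    D M.det = (M.adjugate * M.map D).trace := by
  simp only [derivation_det_eq_sum_updateCol, ← cramer_apply, cramer_eq_adjugate_mulVec]
  rfl

end Derivation

section Resolvent

variable {R n : Type*} [CommRing R] [Fintype n] [DecidableEq n]

/-- The matrix `A - X` over the ring of formal power series, whose determinant is, up to sign, the
characteristic polynomial of `A`. -/
noncomputable def subX (A : Matrix n n R) : Matrix n n R⟦X⟧ :=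
  A.map C - diagonal fun _ => X

/-- The formal resolvent `∑_{p ≥ 0} A^{-(p+1)} X^p` of an invertible matrix `A`, expanded at `0`. -/
noncomputable def formalResolvent (A : Matrix n n R) : Matrix n n R⟦X⟧ :=
  of fun i j => PowerSeries.mk fun p => (A⁻¹ ^ (p + 1)) i j

lemma trace_formalResolvent (A : Matrix n n R) :
    (formalResolvent A).trace = PowerSeries.mk fun p => (A⁻¹ ^ (p + 1)).trace := by
  ext p
  simp [formalResolvent, Matrix.trace]

lemma subX_mul_formalResolvent {A : Matrix n n R} (hA : IsUnit A.det) :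
    subX A * formalResolvent A = 1 := by
  have mul_inv_pow_succ (p : ℕ) : A * A⁻¹ ^ (p + 1) = A⁻¹ ^ p := by
    rw [pow_succ', ← mul_assoc, mul_nonsing_inv A hA, one_mul]
  ext i j p
  have coeff_map_mul : coeff p ((A.map C * formalResolvent A) i j) = (A⁻¹ ^ p) i j := by
    rw [← mul_inv_pow_succ, Matrix.mul_apply, Matrix.mul_apply, map_sum]
    simp only [formalResolvent, map_apply, of_apply, coeff_C_mul, coeff_mk]
  rw [subX, sub_mul, Matrix.sub_apply, map_sub, coeff_map_mul, diagonal_mul]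
  cases p with
  | zero => by_cases hij : i = j <;> simp [Matrix.one_apply, hij]
  | succ p =>
    by_cases hij : i = j <;>
      simp [coeff_succ_X_mul, formalResolvent, Matrix.one_apply, hij, coeff_one]

theorem derivative_det_subX {A : Matrix n n R} (hA : IsUnit A.det) :
    derivative R (subX A).det
      = -(PowerSeries.mk fun p => (A⁻¹ ^ (p + 1)).trace) * (subX A).det := by
  have map_derivative : (subX A).map (derivative R) = -1 := by
    ext1 i j
    by_cases hij : i = j <;> simp [subX, hij]
  have adjugate_eq : (subX A).adjugate = (subX A).det • formalResolvent A := by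
    rw [← mul_one (subX A).adjugate, ← subX_mul_formalResolvent hA, ← mul_assoc, adjugate_mul,
      smul_mul_assoc, one_mul]
  rw [derivation_det_eq_trace_adjugate_mul, map_derivative, adjugate_eq, mul_neg, mul_one,
    Matrix.trace_neg, Matrix.trace_smul, trace_formalResolvent, smul_eq_mul]
  ring

lemma constantCoeff_det_subX (A : Matrix n n R) : constantCoeff (subX A).det = A.det := by
  have map_subX : (subX A).map constantCoeff = A := by
    ext i j
    by_cases hij : i = j <;> simp [subX, hij]
  rw [RingHom.map_det, RingHom.mapMatrix_apply, map_subX]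

theorem mk_trace_inv_pow_eq_sum [IsDomain R] {ι : Type*} {s : Finset ι} {f g : ι → R⟦X⟧}
    {A : Matrix n n R} (hA : IsUnit A.det) (det_eq : (subX A).det = ∏ i ∈ s, f i)
    (hf : ∀ i ∈ s, derivative R (f i) = -g i * f i) :
    (PowerSeries.mk fun p => (A⁻¹ ^ (p + 1)).trace) = ∑ i ∈ s, g i := by
  have det_subX_ne_zero : (subX A).det ≠ 0 := fun h => hA.ne_zero <| by
    rw [← constantCoeff_det_subX, h, map_zero]
  have log_derivative : derivative R (subX A).det = -(∑ i ∈ s, g i) * (subX A).det := by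
    rw [det_eq, derivation_prod_of_eq_mul _ hf, sum_neg_distrib]
  rw [derivative_det_subX hA] at log_derivative
  exact neg_injective (mul_right_cancel₀ det_subX_ne_zero log_derivative)

end Resolvent

section Bidiagonal

variable {R : Type*} {N : ℕ}

/-- The `N × N` upper bidiagonal matrix with diagonal `b` and superdiagonal `c`; only the values
`b i` with `i < N` and `c i` with `i + 1 < N` matter. -/
def bidiagonal [Zero R] (N : ℕ) (b c : ℕ → R) : Matrix (Fin N) (Fin N) R :=
  of fun i j => if (j : ℕ) = i then b i else if (j : ℕ) = i + 1 then c i else 0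

/-- The `N × N` tridiagonal matrix with diagonal `a`, superdiagonal `u` and subdiagonal `l`, where
`l i` is the entry in position `(i + 1, i)`. -/
def tridiagonal [Zero R] (N : ℕ) (a u l : ℕ → R) : Matrix (Fin N) (Fin N) R :=
  of fun i j => if (j : ℕ) = i then a i else if (j : ℕ) = i + 1 then u i
    else if (i : ℕ) = j + 1 then l j else 0

lemma tridiagonal_congr [Zero R] {a a' u u' l l' : ℕ → R} (ha : ∀ i < N, a i = a' i)
    (hu : ∀ i, i + 1 < N → u i = u' i) (hl : ∀ i, i + 1 < N → l i = l' i) :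
    tridiagonal N a u l = tridiagonal N a' u' l' := by
  ext i j
  simp only [tridiagonal, of_apply]
  split_ifs
  · exact ha i i.2
  · exact hu i (by lia)
  · exact hl j (by lia)
  · rfl

variable [CommRing R]

lemma subX_tridiagonal (a u l : ℕ → R) :
    subX (tridiagonal N a u l)
      = tridiagonal N (fun i => C (a i) - X) (fun i => C (u i)) (fun i => C (l i)) := by
  ext1 i j
  simp only [subX, tridiagonal, Matrix.sub_apply, map_apply, of_apply, diagonal_apply, Fin.ext_iff,
    eq_comm (a := (i : ℕ)) (b := (j : ℕ))]
  split_ifs <;> simp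

lemma bidiagonal_mul_apply (b c : ℕ → R) (M : Matrix (Fin N) (Fin N) R) (i k : Fin N) :
    (bidiagonal N b c * M) i k
      = b i * M i k + if h : (i : ℕ) + 1 < N then c i * M ⟨i + 1, h⟩ k else 0 := by
  have split_entry (j : Fin N) : bidiagonal N b c i j * M j k
      = (if j = i then b i * M j k else 0)
        + if (j : ℕ) = i + 1 then c i * M j k else 0 := by
    simp only [bidiagonal, of_apply, Fin.ext_iff]
    split_ifs <;> first | lia | simp
  simp only [Matrix.mul_apply, split_entry, sum_add_distrib, sum_ite_eq', mem_univ, if_true]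
  congr 1
  split_ifs with h
  · have eq_next (j : Fin N) : (j : ℕ) = i + 1 ↔ j = ⟨i + 1, h⟩ := by rw [Fin.ext_iff]
    simp only [eq_next, sum_ite_eq', mem_univ, if_true]
  · exact sum_eq_zero fun j _ => if_neg (by lia)

lemma bidiagonal_mul_transpose (b c b' c' : ℕ → R) :
    bidiagonal N b c * (bidiagonal N b' c')ᵀ
      = tridiagonal N (fun i => b i * b' i + if i + 1 < N then c i * c' i else 0)
          (fun i => c i * b' (i + 1)) (fun i => b (i + 1) * c' i) := by
  ext i k
  rw [bidiagonal_mul_apply]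
  simp only [bidiagonal, tridiagonal, transpose_apply, of_apply]
  grind

lemma det_bidiagonal (b c : ℕ → R) : (bidiagonal N b c).det = ∏ i ∈ range N, b i := by
  have upper : (bidiagonal N b c).IsUpperTriangular := fun i j (hij : j < i) => by
    simp only [bidiagonal, of_apply]
    rw [if_neg (by lia), if_neg (by lia)]
  rw [det_of_isUpperTriangular upper, ← Fin.prod_univ_eq_prod_range]
  simp [bidiagonal]

lemma det_bidiagonal_mul_transpose (b c b' c' : ℕ → R) :
    (bidiagonal N b c * (bidiagonal N b' c')ᵀ).det = ∏ i ∈ range N, b i * b' i := by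
  rw [det_mul, det_transpose, det_bidiagonal, det_bidiagonal, prod_mul_distrib]

end Bidiagonal

section ExponentialGeneratingSeries

variable {K : Type*} [Field K]

/-- The exponential generating series `∑_{n ≥ 0} f n X^n / n!`. -/
noncomputable def egf (f : ℕ → K) : K⟦X⟧ :=
  PowerSeries.mk fun n => f n / n.factorial

/-- The exponential generating series `∑_{n ≥ 1} f n X^n / n!` without its constant term: it does
not depend on `f 0`. -/
noncomputable def positiveEGF (f : ℕ → K) : K⟦X⟧ :=
  egf (Function.update f 0 0)

lemma constantCoeff_positiveEGF (f : ℕ → K) : constantCoeff (positiveEGF f) = 0 := by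
  simp [positiveEGF, egf, ← coeff_zero_eq_constantCoeff_apply]

lemma coeff_succ_positiveEGF (f : ℕ → K) (n : ℕ) :
    coeff (n + 1) (positiveEGF f) = f (n + 1) / (n + 1).factorial := by
  simp [positiveEGF, egf]

lemma positiveEGF_eq_C_mul_X {h : ℕ → K} (h_eq_zero : ∀ p, 2 ≤ p → h p = 0) :
    positiveEGF h = C (h 1) * X := by
  ext n
  rcases n with _ | _ | n
  · simp [constantCoeff_positiveEGF]
  · simp [coeff_succ_positiveEGF]
  · simp [coeff_succ_positiveEGF, coeff_succ_mul_X, h_eq_zero (n + 2)]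

variable [CharZero K]

lemma derivative_positiveEGF (f : ℕ → K) :
    derivative K (positiveEGF f) = egf fun n => f (n + 1) := by
  ext n
  have := n.cast_add_one_ne_zero (R := K)
  rw [coeff_derivative, coeff_succ_positiveEGF, egf, coeff_mk, Nat.factorial_succ]
  push_cast
  field_simp

lemma egf_mul_egf (f g : ℕ → K) :
    egf f * egf g = egf fun n => ∑ k ∈ range (n + 1), (n.choose k : K) * f k * g (n - k) := by
  ext n
  simp only [egf, coeff_mul, coeff_mk, Nat.sum_antidiagonal_eq_sum_range_succ_mk, sum_div]
  refine sum_congr rfl fun k hk => ?_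
  have : (n.factorial : K) ≠ 0 := mod_cast n.factorial_ne_zero
  rw [Nat.cast_choose K (mem_range_succ_iff.mp hk)]
  field_simp

lemma positiveEGF_mul_egf (f g : ℕ → K) :
    positiveEGF f * egf g
      = egf fun n => ∑ k ∈ Icc 1 n, (n.choose k : K) * f k * g (n - k) := by
  rw [positiveEGF, egf_mul_egf]
  congr 1
  ext n
  rw [range_eq_Ico, sum_eq_sum_Ico_succ_bot n.succ_pos, zero_add, Nat.succ_eq_add_one,
    Ico_add_one_right_eq_Icc]
  simp only [Function.update_self, mul_zero, zero_mul, zero_add]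
  refine sum_congr rfl fun k hk => ?_
  rw [Function.update_of_ne (by grind)]

lemma coeff_positiveEGF_mul_positiveEGF (f g : ℕ → K) (n : ℕ) :
    coeff (n + 1) (positiveEGF f * positiveEGF g)
      = (∑ k ∈ Icc 1 n, ((n + 1).choose k : K) * f k * g (n + 1 - k)) / (n + 1).factorial := by
  change coeff (n + 1) (positiveEGF f * egf (Function.update g 0 0)) = _
  rw [positiveEGF_mul_egf, egf, coeff_mk, sum_Icc_succ_top (by lia)]
  simp only [Nat.sub_self, Function.update_self, mul_zero, add_zero]
  congr 1
  refine sum_congr rfl fun k hk => ?_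
  rw [Function.update_of_ne (by grind)]

/-- For `h = h̃_i` and `g = h̃_{i+1}`; the missing term `k = p - 1` of the convolution of
`g` and `h` is `p * g (p - 1) * (F * g 1 + r)`. -/
lemma positiveEGF_eq_of_recurrence {F r : K} {h g : ℕ → K} (h_one : h 1 = F * g 1 + r)
    (h_rec : ∀ p, 2 ≤ p → h p = F * (g p + p * g 1 * g (p - 1))
      + ∑ k ∈ Icc 1 (p - 2), (p.choose k : K) * g k * h (p - k)) :
    positiveEGF h = C F * positiveEGF g + positiveEGF g * positiveEGF h
      + C r * X * (1 - positiveEGF g) := by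
  ext n
  rcases n with _ | _ | m
  · simp [constantCoeff_positiveEGF]
  · simp [mul_assoc, mul_sub, coeff_succ_positiveEGF, coeff_positiveEGF_mul_positiveEGF,
      coeff_succ_X_mul, constantCoeff_positiveEGF, h_one]
  · have h_eq : h (m + 2) = F * g (m + 2)
        + ∑ k ∈ Icc 1 (m + 1), ((m + 2).choose k : K) * g k * h (m + 2 - k)
        - r * ((m + 2 : ℕ) * g (m + 1)) := by
      rw [h_rec (m + 2) (by lia), sum_Icc_succ_top (by lia), Nat.choose_succ_self_right,
        show m + 2 - (m + 1) = 1 by lia, h_one, Nat.add_sub_cancel, Nat.add_succ_sub_one]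
      ring
    have g_div : g (m + 1) / ((m + 1).factorial : K)
        = (m + 2 : ℕ) * g (m + 1) / (m + 2).factorial := by
      have : ((m + 2 : ℕ) : K) ≠ 0 := mod_cast (m + 1).succ_ne_zero
      rw [Nat.factorial_succ (m + 1), Nat.cast_mul, mul_div_mul_left _ _ this]
    simp only [mul_assoc (C r), mul_sub, mul_one, map_add, map_sub, coeff_C_mul, coeff_succ_X_mul,
      coeff_X, coeff_succ_positiveEGF, coeff_positiveEGF_mul_positiveEGF, h_eq, g_div]
    rw [if_neg (by lia)]
    ring

lemma derivative_positiveEGF_eq_of_recurrence {h H : ℕ → K} (H_one : H 1 = h 1)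
    (H_rec : ∀ p, 2 ≤ p → H p = h p
      + ∑ k ∈ Icc 1 (p - 1), ((p - 1).choose k : K) * h k * H (p - k)) :
    derivative K (positiveEGF h) = (1 - positiveEGF h) * egf fun n => H (n + 1) := by
  have H_succ (n : ℕ) : H (n + 1) = h (n + 1)
      + ∑ k ∈ Icc 1 n, (n.choose k : K) * h k * H (n - k + 1) := by
    rcases n with _ | n
    · simp [H_one]
    · rw [H_rec (n + 2) (by lia)]
      congr 1
      refine sum_congr rfl fun k hk => ?_
      rw [show n + 2 - k = n + 1 - k + 1 by grind]
      rfl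
  rw [sub_mul, one_mul, positiveEGF_mul_egf, derivative_positiveEGF]
  ext n
  simp only [egf, map_sub, coeff_mk, H_succ n]
  ring

end ExponentialGeneratingSeries

section Pivots

variable {K : Type*} [Field K] {N : ℕ}

/-- The `D i` are the pivots of Gauss elimination on `A - X`, started at the last row. -/
lemma det_subX_tridiagonal {a u l : ℕ → K} {D : ℕ → K⟦X⟧}
    (D_ne_zero : ∀ i < N, constantCoeff (D i) ≠ 0)
    (D_last : ∀ i, i + 1 = N → D i = C (a i) - X)
    (D_rec : ∀ i, i + 1 < N → (C (a i) - X) * D (i + 1) = D i * D (i + 1) + C (u i * l i)) :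
    (subX (tridiagonal N a u l)).det = ∏ i ∈ range N, D i := by
  have factorization : subX (tridiagonal N a u l)
      = bidiagonal N D (fun i => C (u i))
        * (bidiagonal N 1 fun i => C (l i) * (D (i + 1))⁻¹)ᵀ := by
    rw [subX_tridiagonal, bidiagonal_mul_transpose]
    refine tridiagonal_congr (fun i hi => ?_) (fun i _ => by simp) (fun i hi => ?_)
    · split_ifs with h
      · have mul_inv := PowerSeries.mul_inv_cancel _ (D_ne_zero _ h)
        simp only [Pi.one_apply, mul_one]
        rw [← mul_assoc, ← map_mul]
        linear_combination (D (i + 1))⁻¹ * D_rec i h + (D i - (C (a i) - X)) * mul_inv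
      · simp [D_last i (by lia)]
    · have mul_inv := PowerSeries.mul_inv_cancel _ (D_ne_zero _ hi)
      linear_combination -C (l i) * mul_inv
  rw [factorization, det_bidiagonal_mul_transpose]
  simp

/-- The substitution `D i = q i * (1 - a i)` in the recurrence for the pivots. -/
lemma det_subX_bidiagonal_mul_transpose {b c b' c' q e : ℕ → K} {a : ℕ → K⟦X⟧}
    (hq : ∀ i < N, q i ≠ 0) (b_mul_b' : ∀ i < N, b i * b' i = q i)
    (c_mul_c' : ∀ i, i + 1 < N → c i * c' i = e i)
    (constantCoeff_a : ∀ i < N, constantCoeff (a i) = 0)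
    (a_last : a (N - 1) = C (1 / q (N - 1)) * X)
    (a_rec : ∀ i, i + 1 < N → a i = C (e i / q i) * a (i + 1) + a (i + 1) * a i
      + C (1 / q i) * X * (1 - a (i + 1))) :
    (subX (bidiagonal N b c * (bidiagonal N b' c')ᵀ)).det
      = ∏ i ∈ range N, C (q i) * (1 - a i) := by
  have C_q_mul (x : K) {i : ℕ} (hi : i < N) : C (q i) * C (x / q i) = C x := by
    rw [← map_mul, mul_div_cancel₀ _ (hq i hi)]
  have C_q_mul_inv {i : ℕ} (hi : i < N) : C (q i) * C (1 / q i) = 1 := by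
    rw [C_q_mul 1 hi, map_one]
  rw [bidiagonal_mul_transpose]
  refine det_subX_tridiagonal (fun i hi => ?_) (fun i hi => ?_) fun i hi => ?_
  · simp [constantCoeff_a i hi, hq i hi]
  · obtain rfl : i = N - 1 := by lia
    have hi' : N - 1 < N := by lia
    rw [a_last, b_mul_b' _ hi', if_neg (by lia), add_zero]
    linear_combination -X * C_q_mul_inv hi'
  · have hi' : i < N := by lia
    have off_diagonal : c i * b' (i + 1) * (b (i + 1) * c' i) = e i * q (i + 1) := by
      rw [← b_mul_b' (i + 1) hi, ← c_mul_c' i hi]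
      ring
    simp only [hi, if_true, b_mul_b' i hi', c_mul_c' i hi, off_diagonal, map_add, map_mul]
    linear_combination C (q (i + 1)) * (C (q i) * a_rec i hi + a (i + 1) * C_q_mul (e i) hi'
      + X * (1 - a (i + 1)) * C_q_mul_inv hi')

end Pivots

end BidiagonalTrace

open BidiagonalTrace PowerSeries in
/-- The factors of `A = L U` need not be transposes of each other: only the products `q i` and
`e i` of the corresponding entries of `L` and `U` enter. -/
theorem stmt_5_general {K : Type*} [Field K] [CharZero K] (N : ℕ) (q e b c b' c' : ℕ → K)
    (hq : ∀ i, i < N → q i ≠ 0) (hb : ∀ i, i < N → b i * b' i = q i)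
    (hc : ∀ i, i + 1 < N → c i * c' i = e i)
    (ht Ht : ℕ → ℕ → K)
    (hht1a : ht 1 (N - 1) = 1 / q (N - 1))
    (hht1b : ∀ i, i + 1 < N → ht 1 i = e i / q i * ht 1 (i + 1) + 1 / q i)
    (hhtp0 : ∀ p, 2 ≤ p → ht p (N - 1) = 0)
    (hhtp : ∀ p, 2 ≤ p → ∀ i, i + 1 < N →
      ht p i = e i / q i * (ht p (i + 1) + p * ht 1 (i + 1) * ht (p - 1) (i + 1))
        + ∑ k ∈ Finset.Icc 1 (p - 2), (p.choose k : K) * ht k (i + 1) * ht (p - k) i)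
    (hHt1 : ∀ i, i < N → Ht 1 i = ht 1 i)
    (hHtp : ∀ p, 2 ≤ p → ∀ i, i < N →
      Ht p i = ht p i
        + ∑ k ∈ Finset.Icc 1 (p - 1), ((p - 1).choose k : K) * ht k i * Ht (p - k) i)
    (p : ℕ) (hp : 1 ≤ p) :
    Matrix.trace ((bidiagonal N b c * (bidiagonal N b' c')ᵀ)⁻¹ ^ p)
      = 1 / (Nat.factorial (p - 1) : K) * ∑ i ∈ Finset.range N, Ht p i := by
  set A := bidiagonal N b c * (bidiagonal N b' c')ᵀ with hA
  have det_ne_zero : A.det ≠ 0 := by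
    rw [hA, det_bidiagonal_mul_transpose, Finset.prod_ne_zero_iff]
    exact fun i hi => by simpa [hb i (Finset.mem_range.mp hi)] using hq i (Finset.mem_range.mp hi)
  have pivots : (subX A).det = ∏ i ∈ Finset.range N, C (q i) * (1 - positiveEGF (ht · i)) :=
    det_subX_bidiagonal_mul_transpose hq hb hc (fun i _ => constantCoeff_positiveEGF _)
      (by rw [positiveEGF_eq_C_mul_X hhtp0, hht1a])
      fun i hi => positiveEGF_eq_of_recurrence (hht1b i hi) (hhtp · · i hi)
  have log_derivative (i : ℕ) (hi : i ∈ Finset.range N) :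
      derivative K (C (q i) * (1 - positiveEGF (ht · i)))
        = -(egf fun n => Ht (n + 1) i) * (C (q i) * (1 - positiveEGF (ht · i))) := by
    have hi := Finset.mem_range.mp hi
    rw [Derivation.leibniz, derivative_C, map_sub, Derivation.map_one_eq_zero,
      derivative_positiveEGF_eq_of_recurrence (hHt1 i hi) (hHtp · · i hi)]
    simp only [smul_eq_mul]
    ring
  have coeff_eq := congrArg (coeff (p - 1))
    (mk_trace_inv_pow_eq_sum det_ne_zero.isUnit pivots log_derivative)
  simpa [egf, Nat.sub_add_cancel hp, Finset.sum_div, div_eq_inv_mul, Finset.mul_sum] using coeff_eq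

open BidiagonalTrace in
/-- the formula `Tr((BBᵀ)^{-p}) = (1/(p-1)!) Σ_i H̃_i^{(p)}`.
Indices are 0-based: the paper's 1-based `h̃_i^{(p)}` is `ht p (i-1)`;
`F_i = e_i/q_i` is `e (i-1) / q (i-1)`. -/
theorem stmt_5 (N : ℕ) (hN : 0 < N) (q e : ℕ → ℝ)
    (hq : ∀ i, i < N → 0 < q i) (he : ∀ i, i + 1 < N → 0 < e i)
    (B : Matrix (Fin N) (Fin N) ℝ)
    (hB : ∀ i j : Fin N, B i j =
      if (j : ℕ) = (i : ℕ) then Real.sqrt (q i)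
      else if (j : ℕ) = (i : ℕ) + 1 then Real.sqrt (e i) else 0)
    (ht Ht : ℕ → ℕ → ℝ)
    (hht1a : ht 1 (N - 1) = 1 / q (N - 1))
    (hht1b : ∀ i, i + 1 < N → ht 1 i = e i / q i * ht 1 (i + 1) + 1 / q i)
    (hhtp0 : ∀ p, 2 ≤ p → ht p (N - 1) = 0)
    (hhtp : ∀ p, 2 ≤ p → ∀ i, i + 1 < N →
      ht p i = e i / q i * (ht p (i + 1) + p * ht 1 (i + 1) * ht (p - 1) (i + 1))
        + ∑ k ∈ Finset.Icc 1 (p - 2), (p.choose k : ℝ) * ht k (i + 1) * ht (p - k) i)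
    (hHt1 : ∀ i, i < N → Ht 1 i = ht 1 i)
    (hHtp : ∀ p, 2 ≤ p → ∀ i, i < N →
      Ht p i = ht p i
        + ∑ k ∈ Finset.Icc 1 (p - 1), ((p - 1).choose k : ℝ) * ht k i * Ht (p - k) i) :
    ∀ p, 1 ≤ p →
      Matrix.trace ((B * Bᵀ)⁻¹ ^ p)
        = 1 / (Nat.factorial (p - 1) : ℝ) * ∑ i ∈ Finset.range N, Ht p i := by
  obtain rfl : B = bidiagonal N (fun i => √(q i)) (fun i => √(e i)) := Matrix.ext hB
  exact stmt_5_general N q e _ _ _ _ (fun i hi => (hq i hi).ne')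
    (fun i hi => Real.mul_self_sqrt (hq i hi).le) (fun i hi => Real.mul_self_sqrt (he i hi).le)
    ht Ht hht1a hht1b hhtp0 hhtp hHt1 hHtp
end
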